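/- arXiv:1806.07771 — 11 statements merged into one kernel-verified Lean document; each statement's English description precedes it below -/
import Mathlib

section
/- Let H be a real Banach space, F : H → H continuous, and E : ℝ × H → H a continuously (Fréchet) differentiable flow for u' = F(u): E(0,u) = u, E(t+s,u) = E(t,E(s,u)), and ∂₁E(t,u) = F(E(t,u)). Let u₀ ∈ H and let y : ℝ → H be a continuously differentiable curve with y(0) = u₀ (the numerical solution), and define its defect d(s) = y'(s) − F(y(s)). Then for every t ≥ 0 the nonlinear variation-of-constants (Gröbner–Alekseev) identity holds: y(t) − E(t,u₀) = ∫₀ᵗ D₂E(t−s, y(s))(d(s)) ds. -/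
/-- Gröbner–Alekseev (nonlinear variation-of-constants) formula: the deviation of a `C¹`
curve `y` (with `y 0 = u₀` and defect `d s = y' s - F (y s)`) from the exact flow `E` of
`u' = F(u)` is `y t - E t u₀ = ∫₀ᵗ D₂E(t-s, y s) (d s) ds`. -/
theorem groebner_alekseev
    {H : Type*} [NormedAddCommGroup H] [NormedSpace ℝ H] [CompleteSpace H]
    (F : H → H) (hF : Continuous F)
    (E : ℝ → H → H)
    (hE : ContDiff ℝ 1 (fun q : ℝ × H => E q.1 q.2))
    (hE0 : ∀ u, E 0 u = u)
    (hgroup : ∀ t s u, E (t + s) u = E t (E s u))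
    (hEt : ∀ t u, HasDerivAt (fun τ => E τ u) (F (E t u)) t)
    (u₀ : H) (y y' : ℝ → H)
    (hy : ∀ s, HasDerivAt y (y' s) s) (hy' : Continuous y')
    (hy0 : y 0 = u₀)
    (t : ℝ) (ht : 0 ≤ t) :
    y t - E t u₀ =
      ∫ s in (0:ℝ)..t, (fderiv ℝ (E (t - s)) (y s)) (y' s - F (y s)) := by
  set G : ℝ × H → H := fun q => E q.1 q.2 with hG
  have hA : ∀ q, HasFDerivAt G (fderiv ℝ G q) q := fun q =>
    (hE.differentiable one_ne_zero q).hasFDerivAt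
  have h2 : ∀ τ u, HasFDerivAt (E τ)
      ((fderiv ℝ G (τ, u)).comp (ContinuousLinearMap.inr ℝ ℝ H)) u := fun τ u =>
    (hA (τ, u)).comp u (hasFDerivAt_prodMk_right τ u)
  have h1 : ∀ τ u, fderiv ℝ G (τ, u) (1, 0) = F (E τ u) := by
    intro τ u
    have hp : HasDerivAt (fun σ : ℝ => (σ, u)) ((1 : ℝ), (0 : H)) τ :=
      (hasDerivAt_id τ).prodMk (hasDerivAt_const τ u)
    have hc := (hA (τ, u)).comp_hasDerivAt τ hp
    exact hc.unique (hEt τ u)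
  have key : ∀ τ u, fderiv ℝ G (τ, u) (0, F u) = F (E τ u) := by
    intro τ u
    have ha : HasDerivAt (fun σ => E σ u) (F u) 0 := by
      have := hEt 0 u
      rwa [hE0] at this
    have hb : HasFDerivAt (E τ)
        ((fderiv ℝ G (τ, u)).comp (ContinuousLinearMap.inr ℝ ℝ H)) (E 0 u) := by
      rw [hE0]; exact h2 τ u
    have hc := hb.comp_hasDerivAt (0 : ℝ) ha
    have hd : HasDerivAt (fun σ => E (τ + σ) u) (F (E τ u)) 0 := by
      have := HasDerivAt.comp_const_add (f := fun σ => E σ u) τ 0 (hEt (τ + 0) u)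
      simpa using this
    have he : (fun σ => E (τ + σ) u) = E τ ∘ fun σ => E σ u := by
      funext σ; exact hgroup τ σ u
    rw [he] at hd
    simpa using hc.unique hd
  have hyc : Continuous y := continuous_iff_continuousAt.2 fun s => (hy s).continuousAt
  have hint : ∀ s, (fderiv ℝ (E (t - s)) (y s)) (y' s - F (y s))
      = fderiv ℝ G (t - s, y s) (0, y' s - F (y s)) := by
    intro s
    rw [(h2 (t - s) (y s)).fderiv]
    simp
  have hder : ∀ s, HasDerivAt (fun s => E (t - s) (y s))
      (fderiv ℝ G (t - s, y s) (0, y' s - F (y s))) s := by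
    intro s
    have hp : HasDerivAt (fun s : ℝ => (t - s, y s)) ((-1 : ℝ), y' s) s :=
      ((hasDerivAt_id s).const_sub t).prodMk (hy s)
    have hc := (hA (t - s, y s)).comp_hasDerivAt s hp
    have e1 : ((-1 : ℝ), y' s) = (0, y' s) - (1, 0) := by simp
    have e2 : ((0 : ℝ), y' s - F (y s)) = (0, y' s) - (0, F (y s)) := by simp
    rw [e2, map_sub, key, ← h1, ← map_sub, ← e1]
    exact hc
  have hcont : Continuous fun s => fderiv ℝ G (t - s, y s) (0, y' s - F (y s)) := by
    have hf : Continuous (fderiv ℝ G) := hE.continuous_fderiv one_ne_zero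
    exact (hf.comp (by fun_prop : Continuous fun s : ℝ => (t - s, y s))).clm_apply
      (by fun_prop)
  simp_rw [hint]
  rw [intervalIntegral.integral_eq_sub_of_hasDerivAt (fun s _ => hder s)
    (hcont.intervalIntegrable 0 t)]
  simp [hE0, hy0]
end

section
/- Let H be a real Banach space, F : H → H, and E : ℝ × H → H a continuously Fréchet differentiable flow for u' = F(u) (E(0,u) = u, E(t+s,u) = E(t,E(s,u)), ∂₁E(t,u) = F(E(t,u))). Let S : ℝ × H → H be continuously Fréchet differentiable with S(0,u) = u for all u, and define the modified defect D(t,u) = ∂₁S(t,u) − D₂S(t,u)(F(u)). Then for every t ≥ 0 and u₀ ∈ H the local error satisfies S(t,u₀) − E(t,u₀) = ∫₀ᵗ D(s, E(t−s,u₀)) ds. -/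
/-- Local error representation in terms of the modified defect
`D(t,u) = ∂₁S(t,u) - D₂S(t,u)(F(u))`:
`S(t,u₀) - E(t,u₀) = ∫₀ᵗ D(s, E(t-s,u₀)) ds`. -/
theorem modified_defect_local_error_representation
    {H : Type*} [NormedAddCommGroup H] [NormedSpace ℝ H] [CompleteSpace H]
    (F : H → H) (E : ℝ → H → H)
    (hE : ContDiff ℝ 1 (fun q : ℝ × H => E q.1 q.2))
    (hE0 : ∀ u, E 0 u = u)
    (hgroup : ∀ t s u, E (t + s) u = E t (E s u))
    (hEt : ∀ t u, HasDerivAt (fun τ => E τ u) (F (E t u)) t)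
    (S : ℝ → H → H)
    (hS : ContDiff ℝ 1 (fun q : ℝ × H => S q.1 q.2))
    (hS0 : ∀ u, S 0 u = u)
    (t : ℝ) (ht : 0 ≤ t) (u₀ : H) :
    S t u₀ - E t u₀ =
      ∫ s in (0:ℝ)..t,
        (deriv (fun τ => S τ (E (t - s) u₀)) s
          - fderiv ℝ (S s) (E (t - s) u₀) (F (E (t - s) u₀))) := by
  have hg : ContDiff ℝ 1 (fun s : ℝ => S s (E (t - s) u₀)) := by
    have h1 : ContDiff ℝ 1 (fun s : ℝ => E (t - s) u₀) :=
      hE.comp ((contDiff_const.sub contDiff_id).prodMk contDiff_const)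
    exact hS.comp (contDiff_id.prodMk h1)
  have key : ∀ s : ℝ, deriv (fun τ => S τ (E (t - s) u₀)) s
      - fderiv ℝ (S s) (E (t - s) u₀) (F (E (t - s) u₀))
      = deriv (fun s : ℝ => S s (E (t - s) u₀)) s := by
    intro s
    have hd := ((hS.differentiable one_ne_zero) (s, E (t - s) u₀)).hasFDerivAt
    set L := fderiv ℝ (fun q : ℝ × H => S q.1 q.2) (s, E (t - s) u₀) with hL
    have hA : HasDerivAt (fun τ => S τ (E (t - s) u₀)) (L (1, 0)) s :=
      HasFDerivAt.comp_hasDerivAt (f := fun τ : ℝ => (τ, E (t - s) u₀)) s hd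
        ((hasDerivAt_id s).prodMk (hasDerivAt_const s (E (t - s) u₀)))
    have hB : HasFDerivAt (S s) (L.comp (ContinuousLinearMap.inr ℝ ℝ H)) (E (t - s) u₀) :=
      hd.comp (E (t - s) u₀) (hasFDerivAt_prodMk_right s (E (t - s) u₀))
    have hEs : HasDerivAt (fun s : ℝ => E (t - s) u₀) (-(F (E (t - s) u₀))) s := by
      have := (hEt (t - s) u₀).scomp s ((hasDerivAt_id s).const_sub t)
      simpa [Function.comp_def] using this
    have hC : HasDerivAt (fun s : ℝ => S s (E (t - s) u₀))
        (L (1, -(F (E (t - s) u₀)))) s :=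
      HasFDerivAt.comp_hasDerivAt (f := fun s : ℝ => (s, E (t - s) u₀)) s hd
        ((hasDerivAt_id s).prodMk hEs)
    rw [hA.deriv, hB.fderiv, hC.deriv]
    simp only [ContinuousLinearMap.comp_apply, ContinuousLinearMap.inr_apply]
    rw [← map_sub]
    simp
  simp_rw [key]
  rw [intervalIntegral.integral_deriv_eq_sub
    (fun s _ => (hg.differentiable one_ne_zero) s)
    ((hg.continuous_deriv le_rfl).intervalIntegrable _ _)]
  simp [hE0, hS0]
end

section
/- Let H be a real Banach space, F : H → H, and E : ℝ × H → H a continuously Fréchet differentiable flow for u' = F(u) (E(0,u) = u, E(t+s,u) = E(t,E(s,u)), ∂₁E(t,u) = F(E(t,u))). Let S : ℝ × H → H be continuously Fréchet differentiable with S(0,u) = u for all u, and define the symmetrized defect Ds(t,u) = ∂₁S(t,u) − (1/2)(F(S(t,u)) + D₂S(t,u)(F(u))). Then for every t ≥ 0 and u₀ ∈ H the local error has the symmetrized integral representation S(t,u₀) − E(t,u₀) = ∫₀ᵗ D₂E((t−s)/2, S(s, E((t−s)/2, u₀)))(Ds(s, E((t−s)/2, u₀))) ds. -/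
theorem two_var_chain {H : Type*} [NormedAddCommGroup H] [NormedSpace ℝ H]
    (G : ℝ → H → H) (hG : ContDiff ℝ 1 (fun q : ℝ × H => G q.1 q.2))
    (a : ℝ → ℝ) (v : ℝ → H) (da : ℝ) (dv : H) (s : ℝ)
    (ha : HasDerivAt a da s) (hv : HasDerivAt v dv s) :
    HasDerivAt (fun s => G (a s) (v s))
      (da • deriv (fun τ => G τ (v s)) (a s) + fderiv ℝ (G (a s)) (v s) dv) s := by
  have hd : HasFDerivAt (fun q : ℝ × H => G q.1 q.2)
      (fderiv ℝ (fun q : ℝ × H => G q.1 q.2) (a s, v s)) (a s, v s) :=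
    (hG.differentiable (by norm_num) _).hasFDerivAt
  set L := fderiv ℝ (fun q : ℝ × H => G q.1 q.2) (a s, v s) with hL
  have h1 : HasDerivAt (fun τ => G τ (v s)) (L (1, 0)) (a s) :=
    HasFDerivAt.comp_hasDerivAt (l := fun q : ℝ × H => G q.1 q.2) (f := fun τ => (τ, v s)) (a s) hd
      ((hasDerivAt_id (a s)).prodMk (hasDerivAt_const (a s) (v s)))
  have h2 : HasFDerivAt (G (a s)) (L.comp (ContinuousLinearMap.inr ℝ ℝ H)) (v s) :=
    hd.comp (v s) (hasFDerivAt_prodMk_right (a s) (v s))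
  have h3 : HasDerivAt (fun s => G (a s) (v s)) (L (da, dv)) s :=
    HasFDerivAt.comp_hasDerivAt (l := fun q : ℝ × H => G q.1 q.2) (f := fun τ => (a τ, v τ)) s hd
      (ha.prodMk hv)
  rw [h1.deriv, h2.fderiv]
  convert h3 using 1
  rw [← map_smul, ContinuousLinearMap.comp_apply, ← map_add]
  simp

/-- Local error representation in terms of the symmetrized defect
`Ds(t,u) = ∂₁S(t,u) - (1/2)(F(S(t,u)) + D₂S(t,u)(F(u)))`:
`S(t,u₀) - E(t,u₀) = ∫₀ᵗ D₂E((t-s)/2, S(s, E((t-s)/2,u₀))) (Ds(s, E((t-s)/2,u₀))) ds`. -/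
theorem symmetrized_defect_local_error_representation
    {H : Type*} [NormedAddCommGroup H] [NormedSpace ℝ H] [CompleteSpace H]
    (F : H → H) (E : ℝ → H → H)
    (hE : ContDiff ℝ 1 (fun q : ℝ × H => E q.1 q.2))
    (hE0 : ∀ u, E 0 u = u)
    (hgroup : ∀ t s u, E (t + s) u = E t (E s u))
    (hEt : ∀ t u, HasDerivAt (fun τ => E τ u) (F (E t u)) t)
    (S : ℝ → H → H)
    (hS : ContDiff ℝ 1 (fun q : ℝ × H => S q.1 q.2))
    (hS0 : ∀ u, S 0 u = u)
    (t : ℝ) (ht : 0 ≤ t) (u₀ : H) :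
    S t u₀ - E t u₀ =
      ∫ s in (0:ℝ)..t,
        (fderiv ℝ (E ((t - s) / 2)) (S s (E ((t - s) / 2) u₀)))
          (deriv (fun τ => S τ (E ((t - s) / 2) u₀)) s
            - (1/2 : ℝ) • (F (S s (E ((t - s) / 2) u₀))
                + fderiv ℝ (S s) (E ((t - s) / 2) u₀) (F (E ((t - s) / 2) u₀)))) := by
  have hflow : ∀ r v, F (E r v) = fderiv ℝ (E r) v (F v) := by
    intro r v
    have h0 : HasDerivAt (fun τ => E τ v) (F v) 0 := by simpa [hE0] using hEt 0 v
    have h1 := two_var_chain E hE (fun _ => r) (fun τ => E τ v) 0 (F v) 0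
      (hasDerivAt_const _ _) h0
    have h2 : HasDerivAt (fun τ => E (r + τ) v) (F (E r v)) 0 := by
      have h3 : HasDerivAt (fun τ => E τ v) (F (E r v)) (r + 0) := by simpa using hEt r v
      exact h3.comp_const_add r 0
    simp only [hgroup] at h2
    have := h2.unique h1
    simpa [hE0] using this
  have hr : ∀ s : ℝ, HasDerivAt (fun s : ℝ => (t - s) / 2) (-1 / 2) s := fun s =>
    ((hasDerivAt_id s).const_sub t).div_const 2
  have hw : ∀ s : ℝ, HasDerivAt (fun s : ℝ => E ((t - s) / 2) u₀)
      ((-1 / 2 : ℝ) • F (E ((t - s) / 2) u₀)) s := fun s =>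
    HasDerivAt.scomp (g₁ := fun τ => E τ u₀) (h := fun s : ℝ => (t - s) / 2) s
      (hEt ((t - s) / 2) u₀) (hr s)
  have hφ : ∀ s : ℝ, HasDerivAt (fun s => E ((t - s) / 2) (S s (E ((t - s) / 2) u₀)))
      ((fderiv ℝ (E ((t - s) / 2)) (S s (E ((t - s) / 2) u₀)))
          (deriv (fun τ => S τ (E ((t - s) / 2) u₀)) s
            - (1/2 : ℝ) • (F (S s (E ((t - s) / 2) u₀))
                + fderiv ℝ (S s) (E ((t - s) / 2) u₀) (F (E ((t - s) / 2) u₀))))) s := by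
    intro s
    have h1 := two_var_chain S hS (fun s => s) _ _ _ s (hasDerivAt_id s) (hw s)
    have h2 := two_var_chain E hE _ _ _ _ s (hr s) h1
    convert h2 using 1
    rw [(hEt _ _).deriv, hflow ((t - s) / 2) (S s (E ((t - s) / 2) u₀)), ← map_smul, ← map_add,
      map_smul]
    congr 1
    module
  have hC : ContDiff ℝ 1 (fun s => E ((t - s) / 2) (S s (E ((t - s) / 2) u₀))) := by
    have hr1 : ContDiff ℝ 1 (fun s : ℝ => (t - s) / 2) := by fun_prop
    have c1 : ContDiff ℝ 1 (fun s : ℝ => E ((t - s) / 2) u₀) :=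
      hE.comp (hr1.prodMk contDiff_const)
    have c2 : ContDiff ℝ 1 (fun s : ℝ => S s (E ((t - s) / 2) u₀)) :=
      hS.comp (contDiff_id.prodMk c1)
    exact hE.comp (hr1.prodMk c2)
  have hcont := hC.continuous_deriv le_rfl
  rw [funext fun s => (hφ s).deriv] at hcont
  rw [intervalIntegral.integral_eq_sub_of_hasDerivAt (fun s _ => hφ s)
    (hcont.intervalIntegrable _ _)]
  simp only [sub_self, zero_div, hE0, hS0, sub_zero]
  rw [← hgroup, add_halves]
end

section
/- Let H be a real Banach space, F : H → H, and S : ℝ × H → H a jointly Fréchet differentiable self-adjoint map, i.e. S(−t, S(t,u)) = u for all t and u. Define the symmetrized defect Ds(t,u) = ∂₁S(t,u) − (1/2)(F(S(t,u)) + D₂S(t,u)(F(u))). Then for all t and u₀, Ds(−t, S(t,u₀)) = D₂S(−t, S(t,u₀))(∂₁S(t,u₀) − (1/2)F(S(t,u₀))) − (1/2)F(u₀). -/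
/-- For a self-adjoint scheme `S`, the symmetrized defect
`Ds(t,u) = ∂₁S(t,u) - (1/2)(F(S(t,u)) + D₂S(t,u)(F(u)))` satisfies
`Ds(-t, S(t,u₀)) = D₂S(-t,S(t,u₀))(∂₁S(t,u₀) - (1/2)F(S(t,u₀))) - (1/2)F(u₀)`. -/
theorem symmetrized_defect_reversed_identity
    {H : Type*} [NormedAddCommGroup H] [NormedSpace ℝ H]
    (F : H → H)
    (S : ℝ → H → H) (S₁ : ℝ → H → H) (DS : ℝ → H → (H →L[ℝ] H))
    (hS : Differentiable ℝ (fun q : ℝ × H => S q.1 q.2))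
    (hS₁ : ∀ t u, HasDerivAt (fun τ => S τ u) (S₁ t u) t)
    (hDS : ∀ t u, HasFDerivAt (S t) (DS t u) u)
    (hsym : ∀ t u, S (-t) (S t u) = u)
    (Ds : ℝ → H → H)
    (hDs : ∀ t u, Ds t u = S₁ t u - (1/2 : ℝ) • (F (S t u) + DS t u (F u)))
    (t : ℝ) (u₀ : H) :
    Ds (-t) (S t u₀)
      = DS (-t) (S t u₀) (S₁ t u₀ - (1/2 : ℝ) • F (S t u₀)) - (1/2 : ℝ) • F u₀ := by
  have hL := (hS (-t, S t u₀)).hasFDerivAt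
  set L := fderiv ℝ (fun q : ℝ × H => S q.1 q.2) (-t, S t u₀) with hLdef
  have h1 : L (1, 0) = S₁ (-t) (S t u₀) := by
    have hc : HasDerivAt (fun τ : ℝ => (τ, S t u₀)) ((1 : ℝ), (0 : H)) (-t) :=
      (hasDerivAt_id (-t)).prodMk (hasDerivAt_const (-t) (S t u₀))
    exact (HasFDerivAt.comp_hasDerivAt (-t) hL hc).unique (hS₁ (-t) (S t u₀))
  have h2 : ∀ v, L (0, v) = DS (-t) (S t u₀) v := by
    intro v
    have hc : HasFDerivAt (fun u : H => ((-t : ℝ), u))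
        ((0 : H →L[ℝ] ℝ).prod (ContinuousLinearMap.id ℝ H)) (S t u₀) :=
      (hasFDerivAt_const (-t) (S t u₀)).prodMk (hasFDerivAt_id (S t u₀))
    have := (HasFDerivAt.comp (S t u₀) hL hc).unique (hDS (-t) (S t u₀))
    rw [← this]
    simp
  have h3 : L (-1, S₁ t u₀) = 0 := by
    have hc : HasDerivAt (fun τ : ℝ => (-τ, S τ u₀)) ((-1 : ℝ), S₁ t u₀) t :=
      (hasDerivAt_neg t).prodMk (hS₁ t u₀)
    have hcomp := HasFDerivAt.comp_hasDerivAt t hL hc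
    have hk : HasDerivAt (fun _ : ℝ => u₀) (0 : H) t := hasDerivAt_const t u₀
    refine hcomp.unique (hk.congr_of_eventuallyEq (Filter.Eventually.of_forall ?_))
    intro τ
    exact hsym τ u₀
  have h4 : S₁ (-t) (S t u₀) = DS (-t) (S t u₀) (S₁ t u₀) := by
    have e : ((-1 : ℝ), S₁ t u₀) = (0, S₁ t u₀) - ((1 : ℝ), (0 : H)) := by simp
    rw [e, map_sub, h1, h2] at h3
    exact (sub_eq_zero.mp h3).symm
  rw [hDs, hsym, h4, map_sub, map_smul, smul_add]
  abel
end

section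
/- Let H be a real Banach space, F : H → H, and S : ℝ × H → H a jointly Fréchet differentiable self-adjoint map, i.e. S(−t, S(t,u)) = u for all t and u. Define the symmetrized defect Ds(t,u) = ∂₁S(t,u) − (1/2)(F(S(t,u)) + D₂S(t,u)(F(u))). Then for all t ∈ ℝ and u₀ ∈ H the 'critical term' vanishes exactly: D₂S(−t, S(t,u₀))(Ds(t,u₀)) − Ds(−t, S(t,u₀)) = 0. -/
/-- For a self-adjoint scheme `S`, the critical term built from the symmetrized defect
`Ds(t,u) = ∂₁S(t,u) - (1/2)(F(S(t,u)) + D₂S(t,u)(F(u)))` vanishes exactly: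
`D₂S(-t,S(t,u₀))(Ds(t,u₀)) - Ds(-t,S(t,u₀)) = 0`. -/
theorem critical_term_vanishes
    {H : Type*} [NormedAddCommGroup H] [NormedSpace ℝ H]
    (F : H → H)
    (S : ℝ → H → H) (S₁ : ℝ → H → H) (DS : ℝ → H → (H →L[ℝ] H))
    (hS : Differentiable ℝ (fun q : ℝ × H => S q.1 q.2))
    (hS₁ : ∀ t u, HasDerivAt (fun τ => S τ u) (S₁ t u) t)
    (hDS : ∀ t u, HasFDerivAt (S t) (DS t u) u)
    (hsym : ∀ t u, S (-t) (S t u) = u)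
    (Ds : ℝ → H → H)
    (hDs : ∀ t u, Ds t u = S₁ t u - (1/2 : ℝ) • (F (S t u) + DS t u (F u)))
    (t : ℝ) (u₀ : H) :
    DS (-t) (S t u₀) (Ds t u₀) - Ds (-t) (S t u₀) = 0 := by
  set v := S t u₀ with hv
  obtain ⟨L, hL⟩ : ∃ L, HasFDerivAt (fun q : ℝ × H => S q.1 q.2) L (-t, v) :=
    ⟨_, (hS (-t, v)).hasFDerivAt⟩
  have h1 : L (1, 0) = S₁ (-t) v := by
    have hc : HasDerivAt (fun τ : ℝ => (τ, v)) ((1 : ℝ), (0 : H)) (-t) :=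
      (hasDerivAt_id (-t)).prodMk (hasDerivAt_const (-t) v)
    have h := HasFDerivAt.comp_hasDerivAt (-t) hL hc
    exact h.unique (hS₁ (-t) v)
  have h2 : ∀ h, L (0, h) = DS (-t) v h := by
    intro h
    have hc : HasFDerivAt (fun w : H => ((-t : ℝ), w))
        ((0 : H →L[ℝ] ℝ).prod (ContinuousLinearMap.id ℝ H)) v :=
      (hasFDerivAt_const (-t) v).prodMk (hasFDerivAt_id v)
    have h' := HasFDerivAt.comp v hL hc
    have := h'.unique (hDS (-t) v)
    rw [← this]
    simp
  have h3 : DS (-t) v (S₁ t u₀) = S₁ (-t) v := by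
    have hc : HasDerivAt (fun τ : ℝ => (-τ, S τ u₀)) ((-1 : ℝ), S₁ t u₀) t :=
      (hasDerivAt_neg t).prodMk (hS₁ t u₀)
    have h := HasFDerivAt.comp_hasDerivAt t hL hc
    have hconst : HasDerivAt ((fun q : ℝ × H => S q.1 q.2) ∘ fun τ : ℝ => (-τ, S τ u₀))
        0 t := by
      have : ((fun q : ℝ × H => S q.1 q.2) ∘ fun τ : ℝ => (-τ, S τ u₀)) = fun _ => u₀ := by
        funext τ
        exact hsym τ u₀
      rw [this]
      exact hasDerivAt_const t u₀
    have h0 := h.unique hconst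
    have hsplit : ((-1 : ℝ), S₁ t u₀) = -((1 : ℝ), (0 : H)) + ((0 : ℝ), S₁ t u₀) := by
      simp
    rw [hsplit, map_add, map_neg, h1, h2] at h0
    exact (neg_add_eq_zero.mp h0).symm
  have h4 : DS (-t) v (DS t u₀ (F u₀)) = F u₀ := by
    have h := HasFDerivAt.comp u₀ (hDS (-t) v) (hDS t u₀)
    have he : (S (-t) ∘ S t) = id := by
      funext w
      exact hsym t w
    rw [he] at h
    have := h.unique (hasFDerivAt_id u₀)
    simpa using congrArg (fun A : H →L[ℝ] H => A (F u₀)) this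
  have h5 : S (-t) v = u₀ := hsym t u₀
  rw [hDs, hDs, ← hv, map_sub, map_smul, map_add, h3, h4, h5]
  rw [add_comm (F u₀), sub_self]
end

section
/- Let H be a real Banach space, F : H → H, p ≥ 1 a natural number, and S : ℝ × H → H a jointly Fréchet differentiable self-adjoint map (S(−t,S(t,u)) = u for all t, u). Define Ds(t,u) = ∂₁S(t,u) − (1/2)(F(S(t,u)) + D₂S(t,u)(F(u))) and the corrected scheme Ŝ(t,u) = S(t,u) − (t/(p+1))·Ds(t,u). Assume there exist constants t* > 0 and C₁, C₂, L ≥ 0 such that for all |t| ≤ t* and all u, v ∈ H: (i) ‖Ds(t,u)‖ ≤ C₁|t|^p; (ii) ‖Ds(t,u) − Ds(t,v)‖ ≤ C₂|t|^p·‖u−v‖; (iii) ‖S(t,u) − S(t,v) − D₂S(t,v)(u−v)‖ ≤ (L/2)‖u−v‖². Then there exist constants C ≥ 0 and t₁ > 0 such that for all |t| ≤ t₁ and all u₀ ∈ H, ‖Ŝ(−t, Ŝ(t,u₀)) − u₀‖ ≤ C·|t|^{2p+2}, i.e. the corrected scheme is self-adjoint up to O(t^{2p+2}). -/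
/-- The corrected scheme `Ŝ(t,u) = S(t,u) - (t/(p+1)) Ds(t,u)` built from a self-adjoint
scheme `S` and its symmetrized defect `Ds` is self-adjoint up to `O(t^{2p+2})`:
`‖Ŝ(-t, Ŝ(t,u₀)) - u₀‖ ≤ C |t|^{2p+2}` for small `|t|`. -/
theorem corrected_scheme_almost_selfadjoint
    {H : Type*} [NormedAddCommGroup H] [NormedSpace ℝ H]
    (F : H → H) (p : ℕ) (hp : 1 ≤ p)
    (S : ℝ → H → H) (S₁ : ℝ → H → H) (DS : ℝ → H → (H →L[ℝ] H))
    (hS : Differentiable ℝ (fun q : ℝ × H => S q.1 q.2))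
    (hS₁ : ∀ t u, HasDerivAt (fun τ => S τ u) (S₁ t u) t)
    (hDS : ∀ t u, HasFDerivAt (S t) (DS t u) u)
    (hsym : ∀ t u, S (-t) (S t u) = u)
    (Ds : ℝ → H → H)
    (hDs : ∀ t u, Ds t u = S₁ t u - (1/2 : ℝ) • (F (S t u) + DS t u (F u)))
    (Shat : ℝ → H → H)
    (hShat : ∀ t u, Shat t u = S t u - (t / ((p : ℝ) + 1)) • Ds t u)
    (tstar C₁ C₂ L : ℝ) (htstar : 0 < tstar)
    (hC₁ : 0 ≤ C₁) (hC₂ : 0 ≤ C₂) (hL : 0 ≤ L)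
    (hb1 : ∀ t u, |t| ≤ tstar → ‖Ds t u‖ ≤ C₁ * |t| ^ p)
    (hb2 : ∀ t u v, |t| ≤ tstar → ‖Ds t u - Ds t v‖ ≤ C₂ * |t| ^ p * ‖u - v‖)
    (hb3 : ∀ t u v, |t| ≤ tstar →
      ‖S t u - S t v - DS t v (u - v)‖ ≤ (L / 2) * ‖u - v‖ ^ 2) :
    ∃ C ≥ (0 : ℝ), ∃ t₁ > (0 : ℝ), ∀ t u₀, |t| ≤ t₁ →
      ‖Shat (-t) (Shat t u₀) - u₀‖ ≤ C * |t| ^ (2 * p + 2) := by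
  -- key identity, from differentiating the self-adjointness relation
  have key : ∀ t u, Ds (-t) (S t u) = DS (-t) (S t u) (Ds t u) := by
    intro t u
    have hG := (hS (-t, S t u)).hasFDerivAt
    set G := fderiv ℝ (fun q : ℝ × H => S q.1 q.2) (-t, S t u) with hGdef
    have e1 : S₁ (-t) (S t u) = G (1, 0) := by
      have h : HasDerivAt (fun τ : ℝ => (τ, S t u)) ((1 : ℝ), (0 : H)) (-t) :=
        (hasDerivAt_id (-t)).prodMk (hasDerivAt_const (-t) (S t u))
      have h1 := HasFDerivAt.comp_hasDerivAt (-t) hG h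
      exact (hS₁ (-t) (S t u)).unique h1
    have e2 : ∀ y, DS (-t) (S t u) y = G (0, y) := by
      intro y
      have h : HasFDerivAt (fun z : H => (-t, z)) (ContinuousLinearMap.inr ℝ ℝ H) (S t u) :=
        hasFDerivAt_prodMk_right (-t) (S t u)
      have h1 := HasFDerivAt.comp (S t u) hG h
      have h2 := (hDS (-t) (S t u)).unique h1
      rw [h2]
      simp
    have e3 : DS (-t) (S t u) (S₁ t u) = S₁ (-t) (S t u) := by
      have h : HasDerivAt (fun τ : ℝ => (-τ, S τ u)) ((-1 : ℝ), S₁ t u) t :=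
        (hasDerivAt_neg t).prodMk (hS₁ t u)
      have h1 := HasFDerivAt.comp_hasDerivAt t hG h
      have h2 : HasDerivAt (fun _ : ℝ => u) (G (-1, S₁ t u)) t := by
        convert h1 using 1
        funext τ
        exact (hsym τ u).symm
      have h3 := h2.unique (hasDerivAt_const t u)
      have h4 : ((-1 : ℝ), S₁ t u) = (0, S₁ t u) - (1, 0) := by simp
      rw [h4, map_sub] at h3
      rw [e2, e1]
      exact sub_eq_zero.mp h3
    have e4 : ∀ y, DS (-t) (S t u) (DS t u y) = y := by
      intro y
      have h1 := HasFDerivAt.comp u (hDS (-t) (S t u)) (hDS t u)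
      have h2 : HasFDerivAt (fun z : H => z) ((DS (-t) (S t u)).comp (DS t u)) u := by
        convert h1 using 1
        funext z
        exact (hsym t z).symm
      have h3 := h2.unique (hasFDerivAt_id u)
      simpa using DFunLike.congr_fun h3 y
    rw [hDs (-t), hDs t, hsym, map_sub, map_smul, map_add, e3, e4, add_comm (F u)]
  refine ⟨L / 2 * C₁ ^ 2 + C₂ * C₁, by positivity, tstar, htstar, ?_⟩
  intro t u₀ ht
  have ht' : |(-t)| ≤ tstar := by rwa [abs_neg]
  set a : ℝ := t / ((p : ℝ) + 1) with ha
  have haa : |a| ≤ |t| := by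
    rw [ha, abs_div, abs_of_pos (by positivity : (0 : ℝ) < (p : ℝ) + 1)]
    apply div_le_self (abs_nonneg t)
    have : (0 : ℝ) ≤ p := Nat.cast_nonneg p
    linarith
  set v := S t u₀ with hv
  set d := Ds t u₀ with hd
  set w := Shat t u₀ with hw
  have hwv : w - v = -(a • d) := by
    rw [hw, hShat]; abel
  have hnd : ‖w - v‖ ≤ C₁ * |t| ^ (p + 1) := by
    rw [hwv, norm_neg, norm_smul, Real.norm_eq_abs]
    calc |a| * ‖d‖ ≤ |t| * (C₁ * |t| ^ p) :=
          mul_le_mul haa (hb1 t u₀ ht) (norm_nonneg _) (abs_nonneg _)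
      _ = _ := by ring
  have hA := hb3 (-t) w v ht'
  have hB := hb2 (-t) w v ht'
  rw [abs_neg] at hB
  have hid : Shat (-t) w - u₀ =
      (S (-t) w - S (-t) v - DS (-t) v (w - v)) + a • (Ds (-t) w - Ds (-t) v) := by
    have k := key t u₀
    rw [← hv, ← hd] at k
    have hs := hsym t u₀
    rw [← hv] at hs
    rw [hShat, hwv, hs, k, map_neg, map_smul, neg_div, ← ha, neg_smul, smul_sub]
    abel
  rw [hid]
  have hA' : L / 2 * ‖w - v‖ ^ 2 ≤ L / 2 * (C₁ * |t| ^ (p + 1)) ^ 2 := by gcongr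
  have hB' : ‖a • (Ds (-t) w - Ds (-t) v)‖ ≤ |t| * (C₂ * |t| ^ p * (C₁ * |t| ^ (p + 1))) := by
    rw [norm_smul, Real.norm_eq_abs]
    refine mul_le_mul haa (hB.trans ?_) (norm_nonneg _) (abs_nonneg _)
    gcongr
  calc _ ≤ _ := norm_add_le _ _
    _ ≤ L / 2 * (C₁ * |t| ^ (p + 1)) ^ 2 + |t| * (C₂ * |t| ^ p * (C₁ * |t| ^ (p + 1))) :=
        add_le_add (hA.trans hA') hB'
    _ = _ := by ring
end

section
/- Let H be a real Banach space, p ≥ 2 an even natural number, F : H → H bounded by M and Lipschitz with constant Λ, and E : ℝ × H → H a flow for u' = F(u) satisfying E(0,u) = u, E(t+s,u) = E(t,E(s,u)), and E(t,u) = u + ∫₀ᵗ F(E(σ,u)) dσ. Let Ŝ : ℝ × H → H be a one-step map with Ŝ(0,u) = u such that: (i) there exist C, t* > 0 with ‖Ŝ(−t, Ŝ(t,u)) − u‖ ≤ C|t|^{2p+2} for all |t| ≤ t* and u ∈ H (almost self-adjointness); (ii) the local error admits an expansion Ŝ(t,u) − E(t,u) = c(u)·t^{p+2} + r(t,u), where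 c : H → H is bounded and Lipschitz and ‖r(t,u)‖ ≤ C'|t|^{p+3} for |t| ≤ t* and all u. Then c(u) = 0 for every u ∈ H; consequently ‖Ŝ(t,u) − E(t,u)‖ ≤ C'|t|^{p+3} for |t| ≤ t*, i.e. the corrected scheme has order p+2. -/
/-- If an almost-self-adjoint one-step map `Ŝ` (self-adjointness defect `O(t^{2p+2})`,
`p ≥ 2` even) for the flow of `u' = F(u)` (`F` bounded and Lipschitz) admits a local error
expansion `Ŝ(t,u) - E(t,u) = t^{p+2} c(u) + r(t,u)` with `c` bounded and Lipschitz and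
`‖r(t,u)‖ ≤ C'|t|^{p+3}`, then `c ≡ 0` and hence `Ŝ` has order `p+2`. -/
theorem almost_selfadjoint_corrected_scheme_order
    {H : Type*} [NormedAddCommGroup H] [NormedSpace ℝ H] [CompleteSpace H]
    (p : ℕ) (hp : 2 ≤ p) (hpeven : Even p)
    (F : H → H) (M : ℝ) (hFb : ∀ u, ‖F u‖ ≤ M)
    (Λ : NNReal) (hFlip : LipschitzWith Λ F)
    (E : ℝ → H → H)
    (hE0 : ∀ u, E 0 u = u)
    (hgroup : ∀ t s u, E (t + s) u = E t (E s u))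
    (hEint : ∀ t u, E t u = u + ∫ σ in (0:ℝ)..t, F (E σ u))
    (Shat : ℝ → H → H) (hShat0 : ∀ u, Shat 0 u = u)
    (C tstar : ℝ) (hC : 0 ≤ C) (htstar : 0 < tstar)
    (hsym : ∀ t u, |t| ≤ tstar → ‖Shat (-t) (Shat t u) - u‖ ≤ C * |t| ^ (2 * p + 2))
    (c : H → H) (Mc : ℝ) (hcb : ∀ u, ‖c u‖ ≤ Mc)
    (Λc : NNReal) (hclip : LipschitzWith Λc c)
    (r : ℝ → H → H) (C' : ℝ)
    (hexp : ∀ t u, Shat t u - E t u = t ^ (p + 2) • c u + r t u)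
    (hr : ∀ t u, |t| ≤ tstar → ‖r t u‖ ≤ C' * |t| ^ (p + 3)) :
    (∀ u, c u = 0) ∧
      ∀ t u, |t| ≤ tstar → ‖Shat t u - E t u‖ ≤ C' * |t| ^ (p + 3) := by
  have hM : 0 ≤ M := (norm_nonneg _).trans (hFb 0)
  have hMc : 0 ≤ Mc := (norm_nonneg _).trans (hcb 0)
  have hC' : 0 ≤ C' := by
    have h := (norm_nonneg _).trans (hr tstar 0 (by rw [abs_of_pos htstar]))
    rw [abs_of_pos htstar] at h
    exact nonneg_of_mul_nonneg_left h (by positivity)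
  have hEu : ∀ t u, ‖E t u - u‖ ≤ M * |t| := by
    intro t u
    have h := intervalIntegral.norm_integral_le_of_norm_le_const (a := 0) (b := t)
      (f := fun σ => F (E σ u)) (C := M) (fun x _ => hFb _)
    rw [sub_zero] at h
    have h2 : E t u - u = ∫ σ in (0:ℝ)..t, F (E σ u) := by
      rw [sub_eq_iff_eq_add']; exact hEint t u
    rw [h2]; exact h
  have hcont : ∀ u, Continuous (fun σ => E σ u) := by
    intro u
    have : LipschitzWith ⟨M, hM⟩ (fun σ => E σ u) := by
      apply LipschitzWith.of_dist_le_mul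
      intro x y
      rw [dist_eq_norm, Real.dist_eq]
      have h := hEu (x - y) (E y u)
      rw [← hgroup, sub_add_cancel] at h
      exact h
    exact this.continuous
  have hFc : ∀ u, Continuous (fun σ => F (E σ u)) := fun u => hFlip.continuous.comp (hcont u)
  -- difference of two trajectories
  have hdiff : ∀ s v w, (E s v - E s w) - (v - w) =
      ∫ σ in (0:ℝ)..s, (F (E σ v) - F (E σ w)) := by
    intro s v w
    rw [intervalIntegral.integral_sub ((hFc v).intervalIntegrable _ _)
      ((hFc w).intervalIntegrable _ _)]
    have h1 := hEint s v
    have h2 := hEint s w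
    rw [← sub_eq_iff_eq_add'] at h1 h2
    rw [← h1, ← h2]; abel
  have hdb : ∀ (t : ℝ) (v w : H), 0 < t → Λ * t ≤ 1 / 2 →
      ‖(E (-t) v - E (-t) w) - (v - w)‖ ≤ 2 * Λ * t * ‖v - w‖ := by
    intro t v w ht hΛt
    obtain ⟨s, hs, hmax⟩ := (isCompact_Icc (a := -t) (b := t)).exists_isMaxOn
      ⟨0, by constructor <;> linarith⟩
      (((hcont v).sub (hcont w)).norm.continuousOn)
    set D := ‖E s v - E s w‖ with hD
    have hle : ∀ x ∈ Set.Icc (-t) t, ‖E x v - E x w‖ ≤ D := fun x hx => hmax hx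
    have hD0 : 0 ≤ D := norm_nonneg _
    have key : ∀ x ∈ Set.Icc (-t) t,
        ‖(E x v - E x w) - (v - w)‖ ≤ Λ * D * t := by
      intro x hx
      rw [hdiff]
      have h := intervalIntegral.norm_integral_le_of_norm_le_const (a := 0) (b := x)
        (f := fun σ => F (E σ v) - F (E σ w)) (C := Λ * D) (by
          intro y hy
          refine (hFlip.norm_sub_le _ _).trans ?_
          refine mul_le_mul_of_nonneg_left (hle y ?_) Λ.2
          rcases Set.mem_uIoc.1 hy with hy | hy
          · exact ⟨by linarith [hy.1], hy.2.trans hx.2⟩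
          · exact ⟨by linarith [hy.1, hx.1], by linarith [hy.2]⟩)
      rw [sub_zero] at h
      exact h.trans (mul_le_mul_of_nonneg_left (abs_le.2 hx) (by positivity))
    have h1 := key s hs
    have h2 : D ≤ ‖v - w‖ + Λ * D * t := by
      have := norm_le_norm_add_norm_sub' (E s v - E s w) (v - w)
      linarith
    have h3 : D ≤ 2 * ‖v - w‖ := by nlinarith
    refine (key (-t) ⟨le_rfl, by linarith⟩).trans ?_
    have : Λ * t * D ≤ Λ * t * (2 * ‖v - w‖) := mul_le_mul_of_nonneg_left h3 (by positivity)
    linarith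
  have hqe : Even (p + 2) := hpeven.add (by decide)
  have main : ∀ (u : H) (t : ℝ), 0 < t → t ≤ tstar → t ≤ 1 → Λ * t ≤ 1 / 2 →
      ‖c u‖ ≤ (C + 2 * C' + 2 * Λ * (Mc + C') + Λc * (Mc + C' + M)) * t := by
    intro u t ht hts ht1 hΛt
    have habs : |t| = t := abs_of_pos ht
    have hr1 := hr t u (by rw [habs]; exact hts)
    have hr2 := hr (-t) (Shat t u) (by rw [abs_neg, habs]; exact hts)
    have hs := hsym t u (by rw [habs]; exact hts)
    have e1 := hexp t u
    have e2 := hexp (-t) (Shat t u)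
    rw [hqe.neg_pow] at e2
    rw [abs_neg] at hr2
    rw [habs] at hr1 hr2 hs
    have hEE : E (-t) (E t u) = u := by rw [← hgroup, neg_add_cancel, hE0]
    have hd := hdb t (Shat t u) (E t u) ht hΛt
    rw [hEE] at hd
    have hEu' := hEu t u
    rw [habs] at hEu'
    generalize Shat t u = v at *
    have hQ : 0 < t ^ (p + 2) := by positivity
    have hpow3 : t ^ (p + 3) = t ^ (p + 2) * t := pow_succ _ _
    have hpow : t ^ (2 * p + 2) ≤ t ^ (p + 2) * t := by
      rw [← hpow3]; exact pow_le_pow_of_le_one ht.le ht1 (by omega)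
    rw [hpow3] at hr1 hr2
    set Q := t ^ (p + 2) with hQdef
    have hQt : Q * t ≤ Q := by nlinarith
    have hQ1 : Q ≤ t := by
      have := pow_le_pow_of_le_one ht.le ht1 (show 1 ≤ p + 2 by omega)
      rwa [pow_one] at this
    have hvw : ‖v - E t u‖ ≤ (Mc + C') * Q := by
      rw [e1]
      refine (norm_add_le _ _).trans ?_
      rw [norm_smul, Real.norm_of_nonneg hQ.le]
      have := mul_le_mul_of_nonneg_left (hcb u) hQ.le
      have := mul_le_mul_of_nonneg_left hQt hC'
      linarith
    have hvu : ‖v - u‖ ≤ (Mc + C' + M) * t := by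
      have h := norm_sub_le_norm_sub_add_norm_sub v (E t u) u
      have := mul_le_mul_of_nonneg_left hQ1 (add_nonneg hMc hC')
      linarith
    have hcc : ‖c v - c u‖ ≤ Λc * ((Mc + C' + M) * t) :=
      (hclip.norm_sub_le _ _).trans (mul_le_mul_of_nonneg_left hvu Λc.2)
    have hid : (2 * Q) • c u = (Shat (-t) v - u) - r t u - r (-t) v
        - ((E (-t) v - u) - (v - E t u)) - Q • (c v - c u) := by
      have e2' : Shat (-t) v = E (-t) v + (Q • c v + r (-t) v) := by rw [← e2]; abel
      rw [e2', e1]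
      module
    have hn : 2 * Q * ‖c u‖ ≤ C * (Q * t) + C' * (Q * t) + C' * (Q * t)
        + 2 * Λ * t * ((Mc + C') * Q) + Q * (Λc * ((Mc + C' + M) * t)) := by
      have h0 : 2 * Q * ‖c u‖ = ‖(2 * Q) • c u‖ := by
        rw [norm_smul, Real.norm_of_nonneg (by positivity)]
      rw [h0, hid]
      have a1 := hs.trans (mul_le_mul_of_nonneg_left hpow hC)
      have a2 := hd.trans (mul_le_mul_of_nonneg_left hvw (by positivity))
      have a3 : ‖Q • (c v - c u)‖ ≤ Q * (Λc * ((Mc + C' + M) * t)) := by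
        rw [norm_smul, Real.norm_of_nonneg hQ.le]
        exact mul_le_mul_of_nonneg_left hcc hQ.le
      exact norm_sub_le_of_le (norm_sub_le_of_le (norm_sub_le_of_le
        (norm_sub_le_of_le a1 hr1) hr2) a2) a3
    have hn2 : Q * ‖c u‖ ≤
        Q * ((C + 2 * C' + 2 * Λ * (Mc + C') + Λc * (Mc + C' + M)) * t) := by
      have : 0 ≤ Q * ‖c u‖ := by positivity
      linarith
    exact le_of_mul_le_mul_left hn2 hQ
  have hc0 : ∀ u, c u = 0 := by
    intro u
    set K := C + 2 * C' + 2 * Λ * (Mc + C') + Λc * (Mc + C' + M) with hK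
    have hlim : Filter.Tendsto (fun t : ℝ => K * t) (nhdsWithin 0 (Set.Ioi 0)) (nhds 0) := by
      have : Continuous (fun t : ℝ => K * t) := by fun_prop
      have h := this.tendsto 0
      rw [mul_zero] at h
      exact h.mono_left nhdsWithin_le_nhds
    have hΛlim : ∀ᶠ t : ℝ in nhdsWithin 0 (Set.Ioi 0), (Λ:ℝ) * t < 1 / 2 := by
      have : Continuous (fun t : ℝ => (Λ:ℝ) * t) := by fun_prop
      have h := this.tendsto 0
      rw [mul_zero] at h
      exact (h.mono_left nhdsWithin_le_nhds).eventually (gt_mem_nhds (by norm_num))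
    have hle : ‖c u‖ ≤ 0 := by
      refine ge_of_tendsto hlim ?_
      filter_upwards [hΛlim, Ioo_mem_nhdsGT htstar, Ioo_mem_nhdsGT (zero_lt_one' ℝ)]
        with t h1 h2 h3
      exact main u t h2.1 h2.2.le h3.2.le h1.le
    exact norm_le_zero_iff.1 hle
  refine ⟨hc0, fun t u ht => ?_⟩
  rw [hexp, hc0, smul_zero, zero_add]
  exact hr t u ht
end

section
/- Let H be a real Banach space, p ≥ 1 a natural number, T > 0, and Θ : ℝ → H be (p+1)-times continuously differentiable on [0,T] with Θ^{(j)}(0) = 0 for all 0 ≤ j ≤ p−1. Let M = sup_{s ∈ [0,T]} ‖Θ^{(p+1)}(s)‖. Then for every t ∈ [0,T], the Hermite-type one-point quadrature approximation of the integral satisfies the error bound ‖∫₀ᵗ Θ(s) ds − (t/(p+1))·Θ(t)‖ ≤ (2/(p+1)!)·M·t^{p+2}. -/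
/-- Error bound for the Hermite-type one-point quadrature approximation
`∫₀ᵗ Θ(s) ds ≈ (t/(p+1)) Θ(t)` for a `C^{p+1}` function `Θ` on `[0,T]` vanishing to
order `p` at `0`: the error is bounded by `(2/(p+1)!) M t^{p+2}`, where `M` bounds
the `(p+1)`-st derivative of `Θ` on `[0,T]`. -/
theorem hermite_quadrature_error_bound
    {H : Type*} [NormedAddCommGroup H] [NormedSpace ℝ H] [CompleteSpace H]
    (p : ℕ) (hp : 1 ≤ p) (T : ℝ) (hT : 0 < T)
    (Θ : ℝ → H)
    (hΘ : ContDiffOn ℝ (p + 1) Θ (Set.Icc 0 T))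
    (hΘ0 : ∀ j ≤ p - 1, iteratedDerivWithin j Θ (Set.Icc 0 T) 0 = 0)
    (M : ℝ)
    (hM : ∀ s ∈ Set.Icc (0:ℝ) T, ‖iteratedDerivWithin (p + 1) Θ (Set.Icc 0 T) s‖ ≤ M)
    (t : ℝ) (ht : t ∈ Set.Icc (0:ℝ) T) :
    ‖(∫ s in (0:ℝ)..t, Θ s) - (t / ((p : ℝ) + 1)) • Θ t‖ ≤
      (2 / (Nat.factorial (p + 1) : ℝ)) * M * t ^ (p + 2) := by
  obtain ⟨ht0, htT⟩ := ht
  have hM0 : 0 ≤ M := (norm_nonneg _).trans (hM 0 ⟨le_rfl, hT.le⟩)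
  have hfac : (0:ℝ) < (Nat.factorial p : ℝ) := by exact_mod_cast Nat.factorial_pos p
  obtain ⟨c, hc⟩ : ∃ c : H, ∀ s, taylorWithinEval Θ p (Set.Icc 0 T) 0 s = (s ^ p) • c := by
    refine ⟨((Nat.factorial p : ℝ)⁻¹) • iteratedDerivWithin p Θ (Set.Icc 0 T) 0, fun s => ?_⟩
    rw [taylor_within_apply, Finset.sum_range_succ, Finset.sum_eq_zero, zero_add, sub_zero,
      smul_smul, mul_comm]
    intro k hk
    rw [hΘ0 k (by have := Finset.mem_range.1 hk; omega), smul_zero]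
  have hR : ∀ s ∈ Set.Icc (0:ℝ) T, ‖Θ s - (s ^ p) • c‖ ≤ M / (Nat.factorial p : ℝ) * s ^ (p + 1) := by
    intro s hs
    have h := taylor_mean_remainder_bound hT.le hΘ hs hM
    rw [hc, sub_zero] at h
    refine h.trans_eq ?_
    ring
  have hsub : Set.uIcc 0 t ⊆ Set.Icc 0 T := by
    rw [Set.uIcc_of_le ht0]
    exact Set.Icc_subset_Icc_right htT
  have hI : IntervalIntegrable Θ MeasureTheory.volume 0 t :=
    (hΘ.continuousOn.mono hsub).intervalIntegrable
  have hI2 : IntervalIntegrable (fun s : ℝ => (s ^ p) • c) MeasureTheory.volume 0 t :=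
    Continuous.intervalIntegrable (by fun_prop) _ _
  have hp1 : (0:ℝ) < (p:ℝ) + 1 := by positivity
  have key : (∫ s in (0:ℝ)..t, Θ s) - (t / ((p : ℝ) + 1)) • Θ t
      = (∫ s in (0:ℝ)..t, (Θ s - (s ^ p) • c)) - (t / ((p : ℝ) + 1)) • (Θ t - (t ^ p) • c) := by
    rw [intervalIntegral.integral_sub hI hI2, intervalIntegral.integral_smul_const, integral_pow,
      smul_sub, smul_smul]
    have : (t ^ (p + 1) - 0 ^ (p + 1)) / ((p:ℝ) + 1) = t / ((p : ℝ) + 1) * t ^ p := by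
      rw [zero_pow (by omega)]
      ring
    rw [this]
    abel
  have h1 : ‖∫ s in (0:ℝ)..t, (Θ s - (s ^ p) • c)‖
      ≤ ∫ s in (0:ℝ)..t, M / (Nat.factorial p : ℝ) * s ^ (p + 1) := by
    refine intervalIntegral.norm_integral_le_of_norm_le ht0 ?_
      (Continuous.intervalIntegrable (by fun_prop) _ _)
    exact Filter.Eventually.of_forall fun s hs => hR s ⟨hs.1.le, hs.2.trans htT⟩
  rw [intervalIntegral.integral_const_mul, integral_pow, zero_pow (by omega), sub_zero] at h1
  have h2 : ‖(t / ((p : ℝ) + 1)) • (Θ t - (t ^ p) • c)‖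
      ≤ (t / ((p : ℝ) + 1)) * (M / (Nat.factorial p : ℝ) * t ^ (p + 1)) := by
    rw [norm_smul, Real.norm_of_nonneg (by positivity)]
    exact mul_le_mul_of_nonneg_left (hR t ⟨ht0, htT⟩) (by positivity)
  rw [key]
  refine (norm_sub_le _ _).trans ((add_le_add h1 h2).trans ?_)
  have h3 : M / (Nat.factorial p : ℝ) * (t ^ (p + 1 + 1) / (((p + 1 : ℕ) : ℝ) + 1))
      ≤ M / (Nat.factorial p : ℝ) * (t ^ (p + 1 + 1) / ((p : ℝ) + 1)) := by
    gcongr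
    push_cast
    linarith
  refine (add_le_add_left h3 _).trans_eq ?_
  rw [Nat.factorial_succ]
  push_cast
  field_simp
  ring
end

section
/- Let H be a real Banach space and F : H → H continuously Fréchet differentiable. Let w : ℝ × H → H be jointly Fréchet differentiable with w(t,u) = u + t·F((u + w(t,u))/2) for all (t,u), and write m = (u + w(t,u))/2. Define the symmetrized defect Ds(t,u) = ∂₁w(t,u) − (1/2)(F(w(t,u)) + D₂w(t,u)(F(u))). Then Ds(t,u) = z − (1/2)F(w(t,u)), where z ∈ H satisfies the linear system (Id − (t/2)F'(m))(z) = F(m) − (1/2)F(u) − (t/4)F'(m)(F(u)); equivalently, (Id − (t/2)F'(m))(Ds(t,u) + (1/2)F(w(t,u))) = F(m) − (1/2)F(u) − (t/4)F'(m)(F(u)). -/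
/-- For the implicit midpoint rule `w(t,u) = u + t F((u + w(t,u))/2)`, the symmetrized
defect `Ds(t,u) = ∂₁w(t,u) - (1/2)(F(w(t,u)) + D₂w(t,u)(F(u)))` satisfies
`Ds(t,u) = z - (1/2)F(w(t,u))` where `z` solves
`(Id - (t/2)F'(m)) z = F(m) - (1/2)F(u) - (t/4)F'(m)(F(u))`, with `m = (u+w(t,u))/2`. -/
theorem implicit_midpoint_symmetrized_defect
    {H : Type*} [NormedAddCommGroup H] [NormedSpace ℝ H]
    (F : H → H) (F' : H → (H →L[ℝ] H))
    (hF : ∀ x, HasFDerivAt F (F' x) x) (hF' : Continuous F')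
    (w : ℝ → H → H) (w₁ : ℝ → H → H) (Dw : ℝ → H → (H →L[ℝ] H))
    (hw : Differentiable ℝ (fun q : ℝ × H => w q.1 q.2))
    (hw₁ : ∀ t u, HasDerivAt (fun τ => w τ u) (w₁ t u) t)
    (hDw : ∀ t u, HasFDerivAt (w t) (Dw t u) u)
    (hmid : ∀ t u, w t u = u + t • F ((1/2 : ℝ) • (u + w t u)))
    (Ds : ℝ → H → H)
    (hDs : ∀ t u, Ds t u = w₁ t u - (1/2 : ℝ) • (F (w t u) + Dw t u (F u)))
    (t : ℝ) (u : H) (m : H) (hm : m = (1/2 : ℝ) • (u + w t u)) :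
    ∃ z : H,
      (ContinuousLinearMap.id ℝ H - (t / 2) • F' m) z
          = F m - (1/2 : ℝ) • F u - (t / 4) • (F' m (F u)) ∧
      Ds t u = z - (1/2 : ℝ) • F (w t u) := by
  have h1 : w₁ t u = t • F' m ((1/2 : ℝ) • w₁ t u) + F m := by
    have ha : HasDerivAt (fun τ => (1/2 : ℝ) • (u + w τ u)) ((1/2 : ℝ) • w₁ t u) t :=
      ((hw₁ t u).const_add u).const_smul (1/2 : ℝ)
    have hFm : HasFDerivAt F (F' m) ((1/2 : ℝ) • (u + w t u)) := hm ▸ hF m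
    have hb : HasDerivAt (fun τ => F ((1/2 : ℝ) • (u + w τ u))) (F' m ((1/2 : ℝ) • w₁ t u)) t :=
      hFm.comp_hasDerivAt t ha
    have hc := ((hasDerivAt_id t).smul hb).const_add u
    have hd : HasDerivAt (fun τ => w τ u) _ t :=
      hc.congr_of_eventuallyEq (Filter.Eventually.of_forall fun τ => hmid τ u)
    have he := (hw₁ t u).unique hd
    simpa [hm] using he
  have h2 : ∀ v, Dw t u v = v + t • F' m ((1/2 : ℝ) • (v + Dw t u v)) := by
    intro v
    have ha : HasFDerivAt (fun x => (1/2 : ℝ) • (x + w t x))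
        ((1/2 : ℝ) • (ContinuousLinearMap.id ℝ H + Dw t u)) u :=
      ((hasFDerivAt_id u).add (hDw t u)).const_smul (1/2 : ℝ)
    have hFm : HasFDerivAt F (F' m) ((1/2 : ℝ) • (u + w t u)) := hm ▸ hF m
    have hb : HasFDerivAt (fun x => F ((1/2 : ℝ) • (x + w t x))) _ u := hFm.comp u ha
    have hc := (hasFDerivAt_id u).add (hb.const_smul t)
    have hd : HasFDerivAt (w t) _ u :=
      hc.congr_of_eventuallyEq (Filter.Eventually.of_forall fun x => hmid t x)
    have he := congrArg (fun L : H →L[ℝ] H => L v) ((hDw t u).unique hd)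
    simpa using he
  refine ⟨w₁ t u - (1/2 : ℝ) • Dw t u (F u), ?_, ?_⟩
  · have h3 := h2 (F u)
    simp only [map_smul, map_add] at h1 h3
    simp only [sub_apply, smul_apply,
      ContinuousLinearMap.id_apply, map_sub, map_smul]
    linear_combination (norm := module) h1 - (1/2 : ℝ) • h3
  · rw [hDs]
    module
end

section
/- Let J, K ≥ 1 and p ≥ 0 be natural numbers, and let a : {1,…,J} × {1,…,K} → ℝ and c : {1,…,K} → ℝ be coefficients satisfying the symmetry conditions c_k − 1/2 = 1/2 − c_{K+1−k} for all k, and a_{j,k} = a_{J+1−j, K+1−k} for all j, k. Define X_j = Σ_{k=1}^{K} a_{j,k} and Y_j = Σ_{k=1}^{K} a_{j,k}(c_k − 1/2). Then Σ_{j=1}^{J} X_j^p · Y_j = 0. -/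
/-- Key cancellation for self-adjoint CFM integrators: if the coefficients satisfy the
symmetry conditions `c_k - 1/2 = 1/2 - c_{K+1-k}` and `a_{j,k} = a_{J+1-j,K+1-k}`, then
with `X_j = Σ_k a_{j,k}` and `Y_j = Σ_k a_{j,k}(c_k - 1/2)` one has `Σ_j X_j^p Y_j = 0`.
(Indices are 0-based via `Fin`, with `K+1-k` realized by `Fin.rev`.) -/
theorem cfm_symmetry_cancellation
    (J K : ℕ) (hJ : 1 ≤ J) (hK : 1 ≤ K) (p : ℕ)
    (a : Fin J → Fin K → ℝ) (c : Fin K → ℝ)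
    (hc : ∀ k : Fin K, c k - 1/2 = 1/2 - c k.rev)
    (ha : ∀ (j : Fin J) (k : Fin K), a j k = a j.rev k.rev) :
    ∑ j : Fin J, (∑ k : Fin K, a j k) ^ p * (∑ k : Fin K, a j k * (c k - 1/2)) = 0 := by
  have hX : ∀ j : Fin J, ∑ k : Fin K, a j.rev k = ∑ k : Fin K, a j k := by
    intro j
    rw [← Equiv.sum_comp Fin.revPerm (fun k => a j.rev k)]
    refine Finset.sum_congr rfl fun k _ => ?_
    simp only [Fin.revPerm_apply]
    exact (ha j k).symm
  have hY : ∀ j : Fin J, ∑ k : Fin K, a j.rev k * (c k - 1/2)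
      = -∑ k : Fin K, a j k * (c k - 1/2) := by
    intro j
    rw [← Equiv.sum_comp Fin.revPerm (fun k => a j.rev k * (c k - 1/2)),
      ← Finset.sum_neg_distrib]
    refine Finset.sum_congr rfl fun k _ => ?_
    simp only [Fin.revPerm_apply]
    rw [← ha j k, hc k]
    ring
  have h := Equiv.sum_comp Fin.revPerm
    (fun j : Fin J => (∑ k : Fin K, a j k) ^ p * (∑ k : Fin K, a j k * (c k - 1/2)))
  simp only [Fin.revPerm_apply, hX, hY, mul_neg, Finset.sum_neg_distrib] at h
  linarith
end

section
/- Let H be a real Banach space, F : H → H Lipschitz with constant Λ, and E : ℝ × H → H a flow for u' = F(u) satisfying the hypotheses of the fundamental identity (E(0,u) = u, group property, ∂₁E = F∘E, Fréchet differentiability in u), so that F(E(t,u)) = D₂E(t,u)(F(u)). Let S : ℝ × H → H be jointly Fréchet differentiable, and define the classical defect Dc(t,u) = ∂₁S(t,u) − F(S(t,u)) and the modified defect D(t,u) = ∂₁S(t,u) − D₂S(t,u)(F(u)). Then exactly D(t,u) − Dc(t,u) = (F(S(t,u)) − F(E(t,u))) − (D₂S(t,u) − D₂E(t,u))(F(u));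 consequently, if for some p ≥ 1 and constants C, t* > 0 one has ‖S(t,u) − E(t,u)‖ ≤ C|t|^{p+1} and ‖(D₂S(t,u) − D₂E(t,u))(F(u))‖ ≤ C|t|^{p+1} for |t| ≤ t*, then ‖D(t,u) − Dc(t,u)‖ ≤ (ΛC + C)|t|^{p+1}, i.e. D(t,u) = Dc(t,u) + O(t^{p+1}). -/
/-- Comparison of the modified defect `D(t,u) = ∂₁S(t,u) - D₂S(t,u)(F(u))` with the
classical defect `Dc(t,u) = ∂₁S(t,u) - F(S(t,u))`: exactly,
`D - Dc = (F(S) - F(E)) - (D₂S - D₂E)(F(u))`; consequently, for a scheme of order `p`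
(`‖S - E‖ ≤ C|t|^{p+1}` and `‖(D₂S - D₂E)(F(u))‖ ≤ C|t|^{p+1}`) and `F` Lipschitz with
constant `Λ`, one gets `‖D - Dc‖ ≤ (ΛC + C)|t|^{p+1}`. -/
theorem modified_vs_classical_defect
    {H : Type*} [NormedAddCommGroup H] [NormedSpace ℝ H]
    (F : H → H) (Λ : NNReal) (hFlip : LipschitzWith Λ F)
    (E : ℝ → H → H) (DE : ℝ → H → (H →L[ℝ] H))
    (hE0 : ∀ u, E 0 u = u)
    (hgroup : ∀ t s u, E (t + s) u = E t (E s u))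
    (hEt : ∀ t u, HasDerivAt (fun τ => E τ u) (F (E t u)) t)
    (hDE : ∀ t u, HasFDerivAt (E t) (DE t u) u)
    (S : ℝ → H → H) (S₁ : ℝ → H → H) (DS : ℝ → H → (H →L[ℝ] H))
    (hS : Differentiable ℝ (fun q : ℝ × H => S q.1 q.2))
    (hS₁ : ∀ t u, HasDerivAt (fun τ => S τ u) (S₁ t u) t)
    (hDS : ∀ t u, HasFDerivAt (S t) (DS t u) u)
    (Dc D : ℝ → H → H)
    (hDc : ∀ t u, Dc t u = S₁ t u - F (S t u))
    (hD : ∀ t u, D t u = S₁ t u - DS t u (F u))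
    (p : ℕ) (hp : 1 ≤ p) (C tstar : ℝ) (hC : 0 < C) (htstar : 0 < tstar)
    (horder : ∀ t u, |t| ≤ tstar → ‖S t u - E t u‖ ≤ C * |t| ^ (p + 1))
    (hDSDE : ∀ t u, |t| ≤ tstar → ‖(DS t u - DE t u) (F u)‖ ≤ C * |t| ^ (p + 1)) :
    (∀ t u, D t u - Dc t u
        = (F (S t u) - F (E t u)) - (DS t u - DE t u) (F u)) ∧
      ∀ t u, |t| ≤ tstar →
        ‖D t u - Dc t u‖ ≤ ((Λ : ℝ) * C + C) * |t| ^ (p + 1) := by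
  have key : ∀ t u, F (E t u) = DE t u (F u) := by
    intro t u
    have h1 : HasDerivAt (fun s => E (t + s) u) (F (E t u)) 0 := by
      have h := hEt (t + 0) u
      have h' := h.comp_const_add t 0
      simpa using h'
    have h2 : HasDerivAt (fun s => E t (E s u)) (DE t u (F u)) 0 := by
      have h := hEt 0 u
      rw [hE0] at h
      have h3 : HasFDerivAt (E t) (DE t u) (E 0 u) := by
        rw [hE0]
        exact hDE t u
      exact h3.comp_hasDerivAt (0 : ℝ) h
    have h4 : (fun s => E (t + s) u) = fun s => E t (E s u) := funext fun s => hgroup t s u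
    rw [h4] at h1
    exact h1.unique h2
  have main : ∀ t u, D t u - Dc t u
      = (F (S t u) - F (E t u)) - (DS t u - DE t u) (F u) := by
    intro t u
    rw [hD, hDc, key, ContinuousLinearMap.sub_apply]
    abel
  refine ⟨main, fun t u ht => ?_⟩
  rw [main]
  have hF : ‖F (S t u) - F (E t u)‖ ≤ (Λ : ℝ) * ‖S t u - E t u‖ := hFlip.norm_sub_le _ _
  have hm : (Λ : ℝ) * ‖S t u - E t u‖ ≤ (Λ : ℝ) * (C * |t| ^ (p + 1)) :=
    mul_le_mul_of_nonneg_left (horder t u ht) Λ.2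
  have hs := norm_sub_le (F (S t u) - F (E t u)) ((DS t u - DE t u) (F u))
  have hd := hDSDE t u ht
  calc _ ≤ (Λ : ℝ) * (C * |t| ^ (p + 1)) + C * |t| ^ (p + 1) := by linarith
    _ = _ := by ring
end
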